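/- There exist an allocation A = (A_1,…,A_n) of the indivisible items and payments p_1,…,p_n ≥ 0 with Σ_{i=1}^n p_i = 1 such that {(A_i, p_i)}_{i∈N} is EFM with money; that is, with indivisible goods and chores together with one unit of money, an EFM allocation always exists. -/

import Mathlib

namespace EFM

/-- value of an optional item -/
noncomputable def val {I : Type} (w : I → ℝ) (o : Option I) : ℝ := o.elim 0 w

/-- value of the part of `T` owned by `j` -/
noncomputable def bv {I : Type} {n : ℕ} (w : I → ℝ) (f : I → Fin n) (T : Finset I)
    (j : Fin n) : ℝ := ∑ t ∈ T with f t = j, w t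

@[simp] lemma val_none {I : Type} (w : I → ℝ) : val w none = 0 := rfl
@[simp] lemma val_some {I : Type} (w : I → ℝ) (t : I) : val w (some t) = w t := rfl

lemma val_eq_sum {I : Type} (w : I → ℝ) (o : Option I) :
    val w o = ∑ t ∈ o.toFinset, w t := by
  cases o <;> simp

/-- a valid round: chores `c`, hosted goods `e`, exactly `k` real chores -/
def Valid {I : Type} {n : ℕ} (E C : Finset I) (g : Prop) (k : ℕ)
    (y : Fin n → Option I × Option I) : Prop :=
  (∀ i t, (y i).1 = some t → t ∈ C) ∧ (∀ i t, (y i).2 = some t → t ∈ E) ∧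
  (∀ i j t, (y i).1 = some t → (y j).1 = some t → i = j) ∧
  (∀ i j t, (y i).2 = some t → (y j).2 = some t → i = j) ∧
  (∀ i, g ∨ ((y i).1 = none → (y i).2 = none)) ∧
  (Finset.univ.filter fun i => ((y i).1.isSome = true)).card = k

lemma exists_valid {I : Type} [DecidableEq I] {n : ℕ} (E C : Finset I) (g : Prop) (k : ℕ)
    (hk : k ≤ n) (hC : k ≤ C.card) : ∃ y : Fin n → Option I × Option I, Valid E C g k y := by
  obtain ⟨D, hDC, hD⟩ := Finset.exists_subset_card_eq hC
  let eq := (D.equivFinOfCardEq hD).symm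
  refine ⟨fun i => (if h : i.1 < k then some (eq ⟨i.1, h⟩).1 else none, none), ?_, ?_, ?_, ?_, ?_, ?_⟩
  · intro i t h
    by_cases hi : i.1 < k
    · simp [hi] at h
      rw [← h]; exact hDC (eq ⟨i.1, hi⟩).2
    · simp [hi] at h
  · intro i t h; simp at h
  · intro i j t h1 h2
    by_cases hi : i.1 < k <;> by_cases hj : j.1 < k <;> simp [hi, hj] at h1 h2
    have := eq.injective (Subtype.ext (h1.trans h2.symm))
    simp at this
    exact Fin.ext this
  · intro i j t h; simp at h
  · intro i; right; simp
  · have : (Finset.univ.filter fun i : Fin n => i.1 < k).card = k := by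
      rw [Fin.card_filter_val_lt]; simp [hk]
    convert this using 3 with i
    by_cases hi : i.1 < k <;> simp [hi]

lemma valid_perm {I : Type} {n : ℕ} {E C : Finset I} {g : Prop} {k : ℕ}
    {y : Fin n → Option I × Option I} (h : Valid E C g k y) (π : Equiv.Perm (Fin n)) :
    Valid E C g k (y ∘ π) := by
  obtain ⟨h1, h2, h3, h4, h5, h6⟩ := h
  refine ⟨fun i => h1 _, fun i => h2 _, fun i j t a b => π.injective (h3 _ _ t a b),
    fun i j t a b => π.injective (h4 _ _ t a b), fun i => h5 _, ?_⟩
  rw [← h6]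
  apply Finset.card_bij (fun i _ => π i)
  · intro a ha; simpa using ha
  · intro a _ b _ hab; exact π.injective hab
  · intro b hb; exact ⟨π.symm b, by simpa using hb, by simp⟩

lemma valid_update {I : Type} {n : ℕ} {E C : Finset I} {g : Prop} {k : ℕ}
    {y : Fin n → Option I × Option I} (h : Valid E C g k y) (i : Fin n) (c e : Option I)
    (hc : c.isSome = (y i).1.isSome)
    (hcC : ∀ t, c = some t → t ∈ C ∧ ∀ j ≠ i, (y j).1 ≠ some t)
    (heE : ∀ t, e = some t → t ∈ E ∧ ∀ j ≠ i, (y j).2 ≠ some t)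
    (hg : g ∨ (c = none → e = none)) :
    Valid E C g k (Function.update y i (c, e)) := by
  obtain ⟨h1, h2, h3, h4, h5, h6⟩ := h
  refine ⟨?_, ?_, ?_, ?_, ?_, ?_⟩
  · intro j t; by_cases hj : j = i
    · subst hj; simp; exact fun h => (hcC t h).1
    · simp [hj]; exact h1 j t
  · intro j t; by_cases hj : j = i
    · subst hj; simp; exact fun h => (heE t h).1
    · simp [hj]; exact h2 j t
  · intro a b t
    by_cases ha : a = i <;> by_cases hb : b = i <;> simp [ha, hb]
    · intro h h'; exact absurd h' ((hcC t h).2 b hb)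
    · intro h h'; exact absurd h ((hcC t h').2 a ha)
    · exact h3 a b t
  · intro a b t
    by_cases ha : a = i <;> by_cases hb : b = i <;> simp [ha, hb]
    · intro h h'; exact absurd h' ((heE t h).2 b hb)
    · intro h h'; exact absurd h ((heE t h').2 a ha)
    · exact h4 a b t
  · intro j; by_cases hj : j = i
    · subst hj; simpa using hg
    · simpa [hj] using h5 j
  · rw [← h6]; congr 1; ext j
    by_cases hj : j = i
    · subst hj; simp [hc]
    · simp [hj]

/-- The round lemma. -/
lemma round {I : Type} [Fintype I] [DecidableEq I] {n : ℕ} (v : Fin n → I → ℝ)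
    (E C : Finset I) (hEC : Disjoint E C) (g : Prop) (k : ℕ) (hk : k ≤ n) (hC : k ≤ C.card) :
    ∃ (y : Fin n → Option I × Option I) (E' C' : Finset I),
      Valid E C g k y ∧ E' ⊆ E ∧ C' ⊆ C ∧ C'.card + k = C.card ∧
      (∀ i t, (y i).2 = some t → t ∉ E') ∧
      (∀ t ∈ E, t ∉ E' → ∃ i, (y i).2 = some t) ∧
      (∀ i, (y i).1 ≠ none → ∀ t ∈ C', ∀ o : Option I, (∀ s, o = some s → s ∈ E') →
        v i t + val (v i) o ≤ val (v i) (y i).1 + val (v i) (y i).2) ∧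
      (∀ i, (g ∨ (y i).1 ≠ none) → ∀ o : Option I, (∀ s, o = some s → s ∈ E') →
        val (v i) o ≤ val (v i) (y i).2) ∧
      (∀ π : Equiv.Perm (Fin n), ∑ i, (val (v i) (y (π i)).1 + val (v i) (y (π i)).2) ≤
        ∑ i, (val (v i) (y i).1 + val (v i) (y i).2)) ∧
      (∀ f' : I → Fin n, ∃ f : I → Fin n,
        (∀ w j, bv w f (E ∪ C) j = val w (y j).1 + val w (y j).2 + bv w f' (E' ∪ C') j) ∧
        (∀ j t, (y j).1 = some t → f t = j) ∧ (∀ j t, (y j).2 = some t → f t = j) ∧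
        (∀ t ∈ E' ∪ C', f t = f' t)) := by
  classical
  let W : (Fin n → Option I × Option I) → ℝ :=
    fun y => ∑ i, (val (v i) (y i).1 + val (v i) (y i).2)
  obtain ⟨y, hy, hmax⟩ := Finset.exists_max_image
    (Finset.univ.filter fun y : Fin n → Option I × Option I => Valid E C g k y) W (by
      obtain ⟨y, hy⟩ := exists_valid E C g k hk hC
      exact ⟨y, by simpa using hy⟩)
  have hy : Valid E C g k y := by simpa using hy
  have hmax : ∀ z, Valid E C g k z → W z ≤ W y := fun z hz => hmax z (by simpa using hz)
  have hupd : ∀ i c e, Valid E C g k (Function.update y i (c, e)) →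
      val (v i) c + val (v i) e ≤ val (v i) (y i).1 + val (v i) (y i).2 := by
    intro i c e hv
    have h := hmax _ hv
    simp only [W] at h
    rw [← Finset.add_sum_erase _ _ (Finset.mem_univ i),
      ← Finset.add_sum_erase (a := i) _ (fun i => val (v i) (y i).1 + val (v i) (y i).2) (Finset.mem_univ i)] at h
    have h2 : ∑ x ∈ Finset.univ.erase i, (val (v x) (Function.update y i (c, e) x).1 +
        val (v x) (Function.update y i (c, e) x).2) =
        ∑ x ∈ Finset.univ.erase i, (val (v x) (y x).1 + val (v x) (y x).2) := by
      apply Finset.sum_congr rfl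
      intro x hx
      rw [Function.update_of_ne (Finset.ne_of_mem_erase hx)]
    rw [h2] at h
    have h := le_of_add_le_add_right h
    simpa using h
  have hV := hy
  obtain ⟨h1, h2, h3, h4, h5, h6⟩ := hy
  let E' := E.filter fun t => ¬ ∃ i, (y i).2 = some t
  let C' := C.filter fun t => ¬ ∃ i, (y i).1 = some t
  have mE : ∀ t, t ∈ E' ↔ t ∈ E ∧ ∀ i, (y i).2 ≠ some t := by intro t; simp [E']
  have mC : ∀ t, t ∈ C' ↔ t ∈ C ∧ ∀ i, (y i).1 ≠ some t := by intro t; simp [C']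
  refine ⟨y, E', C', hV, Finset.filter_subset _ _, Finset.filter_subset _ _, ?_, ?_, ?_, ?_, ?_, ?_, ?_⟩
  · have := Finset.card_filter_add_card_filter_not (s := C) (fun t => ∃ i, (y i).1 = some t)
    have h7 : (C.filter fun t => ∃ i, (y i).1 = some t).card = k := by
      rw [← h6]; symm
      apply Finset.card_bij (fun i hi => (y i).1.get (by simpa using hi))
      · intro i hi
        have : (y i).1 = some ((y i).1.get (by simpa using hi)) := by simp
        simp only [Finset.mem_filter]
        exact ⟨h1 i _ this, i, this⟩
      · intro a ha b hb hab
        refine h3 a b ((y a).1.get (by simpa using ha)) (by simp) ?_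
        rw [hab]; simp
      · intro t ht
        obtain ⟨_, i, hi⟩ := Finset.mem_filter.1 ht
        exact ⟨i, by simp [hi], by simp [hi]⟩
    simp only [C']
    omega
  · intro i t h h'; exact ((mE t).1 h').2 i h
  · intro t ht h'; by_contra hne; push Not at hne; exact h' ((mE t).2 ⟨ht, hne⟩)
  · intro i hi t ht o ho
    apply hupd i (some t) o
    apply valid_update hV
    · simp; exact (Option.isSome_iff_ne_none.2 hi)
    · intro s hs; cases hs; exact ⟨((mC t).1 ht).1, fun j _ => ((mC t).1 ht).2 j⟩
    · intro s hs; have := (mE s).1 (ho s hs); exact ⟨this.1, fun j _ => this.2 j⟩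
    · right; simp
  · intro i hi o ho
    have := hupd i (y i).1 o (by
      apply valid_update hV
      · rfl
      · intro s hs; exact ⟨h1 i s hs, fun j hj hj' => hj (h3 j i s hj' hs)⟩
      · intro s hs; have := (mE s).1 (ho s hs); exact ⟨this.1, fun j _ => this.2 j⟩
      · rcases hi with h | h
        · exact Or.inl h
        · exact Or.inr fun h' => absurd h' h)
    linarith
  · intro π; exact hmax _ (valid_perm hV π)
  · intro f'
    let f : I → Fin n := fun t =>
      if h : ∃ i, ((y i).1 = some t ∨ (y i).2 = some t) then h.choose else f' t
    have hEC' : ∀ t, t ∈ E → t ∈ C → False := fun t a b => Finset.disjoint_left.1 hEC a b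
    have huniq : ∀ i j t, ((y i).1 = some t ∨ (y i).2 = some t) →
        ((y j).1 = some t ∨ (y j).2 = some t) → i = j := by
      rintro i j t (a | a) (b | b)
      · exact h3 _ _ _ a b
      · exact (hEC' t (h2 _ _ b) (h1 _ _ a)).elim
      · exact (hEC' t (h2 _ _ a) (h1 _ _ b)).elim
      · exact h4 _ _ _ a b
    have hf1 : ∀ j t, ((y j).1 = some t ∨ (y j).2 = some t) → f t = j := by
      intro j t h
      have hex : ∃ i, ((y i).1 = some t ∨ (y i).2 = some t) := ⟨j, h⟩
      simp only [f, dif_pos hex]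
      exact huniq _ _ t hex.choose_spec h
    have hf2 : ∀ t ∈ E' ∪ C', f t = f' t := by
      intro t ht
      have : ¬ ∃ i, ((y i).1 = some t ∨ (y i).2 = some t) := by
        rintro ⟨i, h⟩
        rw [Finset.mem_union, mE, mC] at ht
        rcases ht with ht | ht <;> rcases h with h | h
        · exact hEC' t ht.1 (h1 _ _ h)
        · exact ht.2 i h
        · exact ht.2 i h
        · exact hEC' t (h2 _ _ h) ht.1
      simp only [f, dif_neg this]
    refine ⟨f, ?_, fun j t h => hf1 j t (Or.inl h), fun j t h => hf1 j t (Or.inr h), hf2⟩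
    intro w j
    have key : (E ∪ C).filter (fun t => f t = j) =
        ((y j).1.toFinset ∪ (y j).2.toFinset) ∪ (E' ∪ C').filter (fun t => f' t = j) := by
      ext t
      simp only [Finset.mem_filter, Finset.mem_union, Option.mem_toFinset, Option.mem_def]
      constructor
      · rintro ⟨ht, hft⟩
        by_cases hex : ∃ i, ((y i).1 = some t ∨ (y i).2 = some t)
        · obtain ⟨i, hi⟩ := hex
          have := hf1 i t hi
          rw [hft] at this; subst this; exact Or.inl hi
        · push Not at hex
          have ht' : t ∈ E' ∪ C' := by
            rw [Finset.mem_union, mE, mC]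
            rcases ht with ht | ht
            · exact Or.inl ⟨ht, fun i => (hex i).2⟩
            · exact Or.inr ⟨ht, fun i => (hex i).1⟩
          exact Or.inr ⟨Finset.mem_union.1 ht', by rw [← hf2 t ht', hft]⟩
      · rintro (h | ⟨h, h'⟩)
        · refine ⟨?_, hf1 j t h⟩
          rcases h with h | h
          · exact Or.inr (h1 _ _ h)
          · exact Or.inl (h2 _ _ h)
        · refine ⟨?_, by rw [hf2 t (Finset.mem_union.2 h), h']⟩
          rcases h with h | h
          · exact Or.inl ((mE t).1 h).1
          · exact Or.inr ((mC t).1 h).1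
    unfold bv
    rw [key, Finset.sum_union, Finset.sum_union, val_eq_sum, val_eq_sum]
    · rw [Finset.disjoint_left]; intro t a b
      simp only [Option.mem_toFinset, Option.mem_def] at a b
      exact hEC' t (h2 _ _ b) (h1 _ _ a)
    · rw [Finset.disjoint_left]; intro t a b
      simp only [Finset.mem_union, Option.mem_toFinset, Option.mem_def, Finset.mem_filter, mE, mC] at a b
      rcases a with a | a <;> rcases b.1 with b | b
      · exact hEC' t b.1 (h1 _ _ a)
      · exact b.2 j a
      · exact b.2 j a
      · exact hEC' t (h2 _ _ a) b.1

/-- no permutation of the bundles increases the welfare -/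
def MaxW {I : Type} {n : ℕ} (v : Fin n → I → ℝ) (f : I → Fin n) (T : Finset I) : Prop :=
  ∀ π : Equiv.Perm (Fin n), ∑ i, bv (v i) f T (π i) ≤ ∑ i, bv (v i) f T i

lemma maxW_round {I : Type} [DecidableEq I] {n : ℕ} (v : Fin n → I → ℝ)
    (y : Fin n → Option I × Option I) (f f' : I → Fin n) (T T' : Finset I)
    (hp : ∀ π : Equiv.Perm (Fin n), ∑ i, (val (v i) (y (π i)).1 + val (v i) (y (π i)).2) ≤
        ∑ i, (val (v i) (y i).1 + val (v i) (y i).2))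
    (hf : ∀ w j, bv w f T j = val w (y j).1 + val w (y j).2 + bv w f' T' j)
    (h : MaxW v f' T') : MaxW v f T := by
  intro π
  simp only [hf]
  rw [Finset.sum_add_distrib, Finset.sum_add_distrib (g := fun i => bv (v i) f' T' i)]
  exact add_le_add (hp π) (h π)

lemma goods {I : Type} [Fintype I] [DecidableEq I] {n : ℕ} (hn : 0 < n) (v : Fin n → I → ℝ) :
    ∀ (m : ℕ) (E : Finset I), E.card = m → (∀ e ∈ E, ∃ i, 0 < v i e) →
    ∃ (f : I → Fin n) (x : Fin n → Option I), MaxW v f E ∧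
      (∀ j e, x j = some e → e ∈ E ∧ f e = j) ∧
      ∀ i j, bv (v i) f E j - val (v i) (x j) ≤ bv (v i) f E i := by
  intro m
  induction m using Nat.strong_induction_on with
  | _ m ih =>
  intro E hm hE
  rcases Finset.eq_empty_or_nonempty E with rfl | ⟨e0, he0⟩
  · refine ⟨fun _ => ⟨0, hn⟩, fun _ => none, ?_, by simp, ?_⟩
    · intro π; simp [bv]
    · intro i j; simp [bv]
  obtain ⟨y, E', C', hV, hE', hC', hcard, hy1, hy2, -, hb, hperm, hcomb⟩ :=
    round v E ∅ (by simp) True 0 (by omega) (by simp)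
  have hC0 : C' = ∅ := Finset.subset_empty.1 hC'
  subst hC0
  simp only [Finset.union_empty] at hcomb
  have hc : ∀ i, (y i).1 = none := by
    intro i
    rcases h : (y i).1 with _ | t
    · rfl
    · exact absurd (hV.1 i t h) (by simp)
  have hlt : E'.card < m := by
    rw [← hm]
    apply Finset.card_lt_card
    rw [Finset.ssubset_iff_subset_ne]
    refine ⟨hE', ?_⟩
    rintro rfl
    obtain ⟨i, hi⟩ := hE e0 he0
    have h1 := hb i (Or.inl trivial) (some e0) (by intro s hs; cases hs; exact he0)
    rcases h : (y i).2 with _ | t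
    · rw [h] at h1; simp at h1; linarith
    · exact hy1 i t h (hV.2.1 i t h)
  obtain ⟨f', x', hM, hx', hle⟩ := ih _ hlt E' rfl (fun e he => hE e (hE' he))
  obtain ⟨f, hf, -, hf2, hf3⟩ := hcomb f'
  refine ⟨f, fun j => (y j).2, maxW_round v y f f' _ _ hperm hf hM, ?_, ?_⟩
  · intro j e he; exact ⟨hV.2.1 j e he, hf2 j e he⟩
  · intro i j
    have h1 := hb i (Or.inl trivial) (x' j) (fun s hs => (hx' j s hs).1)
    have h2 := hle i j
    rw [hf, hf, hc, hc]
    simp only [val_none]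
    linarith

lemma chores {I : Type} [Fintype I] [DecidableEq I] {n : ℕ} (hn : 0 < n) (v : Fin n → I → ℝ) :
    ∀ (S : ℕ) (E C : Finset I), Disjoint E C → C.card = n * (S + 1) →
    (∀ e ∈ E, ∃ i, 0 < v i e) →
    ∃ (f : I → Fin n) (c : Fin n → I) (x : Fin n → Option I) (t : Fin n → I),
      MaxW v f (E ∪ C) ∧ (∀ i, t i ∈ C ∧ f (t i) = i) ∧ (∀ j, c j ∈ C) ∧
      (∀ j e, x j = some e → e ∈ E) ∧
      ∀ i j, bv (v i) f (E ∪ C) j - (v i (c j) + val (v i) (x j)) ≤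
        bv (v i) f (E ∪ C) i - v i (t i) := by
  intro S
  induction S with
  | zero =>
    intro E C hEC hcC hE
    obtain ⟨y, E', C', hV, hE', hC', hcard, hy1, hy2, -, hb, hperm, hcomb⟩ :=
      round v E C hEC False n le_rfl (by rw [hcC]; simp)
    have hC0 : C' = ∅ := by rw [← Finset.card_eq_zero]; omega
    subst hC0
    simp only [Finset.union_empty] at hcomb
    have hreal : ∀ i, ∃ t, (y i).1 = some t := by
      intro i
      have h6 := hV.2.2.2.2.2
      have : (Finset.univ.filter fun i => ((y i).1.isSome = true)) = Finset.univ := by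
        apply Finset.eq_univ_of_card; simpa using h6
      have hi := Finset.mem_univ i
      rw [← this] at hi
      exact Option.isSome_iff_exists.1 (by simpa using hi)
    choose c hc using hreal
    obtain ⟨f', x', hM, hx', hle⟩ := goods hn v _ E' rfl (fun e he => hE e (hE' he))
    obtain ⟨f, hf, hf1, hf2, hf3⟩ := hcomb f'
    refine ⟨f, c, fun j => (y j).2, c, maxW_round v y f f' _ _ hperm hf hM,
      fun i => ⟨hV.1 i _ (hc i), hf1 i _ (hc i)⟩, fun i => hV.1 i _ (hc i), fun j e => hV.2.1 j e, ?_⟩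
    intro i j
    have h1 := hb i (Or.inr (by simp [hc])) (x' j) (fun s hs => (hx' j s hs).1)
    have h2 := hle i j
    rw [hf, hf, hc, hc]
    simp only [val_some]
    linarith
  | succ S ih =>
    intro E C hEC hcC hE
    obtain ⟨y, E', C', hV, hE', hC', hcard, hy1, hy2, ha, hb, hperm, hcomb⟩ :=
      round v E C hEC False n le_rfl (by rw [hcC]; nlinarith)
    have hreal : ∀ i, ∃ t, (y i).1 = some t := by
      intro i
      have h6 := hV.2.2.2.2.2
      have : (Finset.univ.filter fun i => ((y i).1.isSome = true)) = Finset.univ := by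
        apply Finset.eq_univ_of_card; simpa using h6
      have hi := Finset.mem_univ i
      rw [← this] at hi
      exact Option.isSome_iff_exists.1 (by simpa using hi)
    choose c hc using hreal
    obtain ⟨f', c', x', t, hM, ht, hc', hx', hle⟩ := ih E' C'
      (Finset.disjoint_of_subset_left hE' (Finset.disjoint_of_subset_right hC' hEC))
      (by have : n * (S + 1 + 1) = n * (S + 1) + n := by ring
          omega) (fun e he => hE e (hE' he))
    obtain ⟨f, hf, hf1, hf2, hf3⟩ := hcomb f'
    refine ⟨f, c, fun j => (y j).2, t, maxW_round v y f f' _ _ hperm hf hM,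
      fun i => ⟨hC' (ht i).1, by rw [hf3 _ (Finset.mem_union_right _ (ht i).1)]; exact (ht i).2⟩,
      fun i => hV.1 i _ (hc i), fun j e => hV.2.1 j e, ?_⟩
    intro i j
    have h1 := ha i (by simp [hc]) (c' j) (hc' j) (x' j) (fun s hs => hx' j s hs)
    have h2 := hle i j
    rw [hf, hf]
    have h3 : val (v i) (y j).1 = v i (c j) := by rw [hc]; rfl
    linarith

lemma core {I : Type} [Fintype I] [DecidableEq I] {n : ℕ} (hn : 0 < n) (v : Fin n → I → ℝ)
    (E C : Finset I) (hEC : Disjoint E C) (hE : ∀ e ∈ E, ∃ i, 0 < v i e)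
    (hC : ∀ c ∈ C, ∀ i, v i c ≤ 0) (hst : ∀ e ∈ E, ∀ c ∈ C, ∀ i, v i e + v i c ≤ 0) :
    ∃ f : I → Fin n, MaxW v f (E ∪ C) ∧ ∀ i j,
      bv (v i) f (E ∪ C) j ≤ bv (v i) f (E ∪ C) i ∨
      (∃ t ∈ C, f t = i ∧ bv (v i) f (E ∪ C) j ≤ bv (v i) f (E ∪ C) i - v i t) ∨
      (∃ t ∈ E, f t = j ∧ bv (v i) f (E ∪ C) j - v i t ≤ bv (v i) f (E ∪ C) i) := by
  have hst' : ∀ c ∈ C, ∀ o : Option I, (∀ s, o = some s → s ∈ E) → ∀ i,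
      v i c + val (v i) o ≤ 0 := by
    intro c hc o ho i
    rcases o with _ | s
    · simpa using hC c hc i
    · have := hst s (ho s rfl) c hc i
      simp; linarith
  obtain ⟨y, E', C', hV, hE', hC', hcard, hy1, hy2, ha, hb, hperm, hcomb⟩ :=
    round v E C hEC False (C.card % n) (Nat.mod_lt _ hn).le (Nat.mod_le _ _)
  have hneg : ∀ i j, val (v i) (y j).1 + val (v i) (y j).2 ≤ 0 := by
    intro i j
    rcases h : (y j).1 with _ | t
    · have := (hV.2.2.2.2.1 j).resolve_left id h
      rw [this]; simp
    · exact hst' t (hV.1 j t h) _ (fun s hs => hV.2.1 j s hs) i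
  have hC'card : C'.card = n * (C.card / n) := by
    have := Nat.div_add_mod C.card n
    omega
  rcases hS : C.card / n with _ | S
  · have hC0 : C' = ∅ := by rw [← Finset.card_eq_zero, hC'card, hS]; simp
    subst hC0
    simp only [Finset.union_empty] at hcomb
    obtain ⟨f', x', hM, hx', hle⟩ := goods hn v _ E' rfl (fun e he => hE e (hE' he))
    obtain ⟨f, hf, hf1, hf2, hf3⟩ := hcomb f'
    refine ⟨f, maxW_round v y f f' _ _ hperm hf hM, ?_⟩
    intro i j
    have h2 := hle i j
    have h3 := hneg i j
    rcases h : (y i).1 with _ | t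
    · have he := (hV.2.2.2.2.1 i).resolve_left id h
      rcases hx : x' j with _ | s
      · left
        rw [hf, hf, h, he]
        rw [hx] at h2
        simp only [val_none] at h2 ⊢
        linarith
      · right; right
        obtain ⟨hs1, hs2⟩ := hx' j s hx
        refine ⟨s, hE' hs1, by rw [hf3 s hs1, hs2], ?_⟩
        rw [hf, hf, h, he]
        rw [hx] at h2
        simp only [val_none, val_some] at h2 ⊢
        linarith
    · right; left
      refine ⟨t, hV.1 i t h, hf1 i t h, ?_⟩
      have h1 := hb i (Or.inr (by simp [h])) (x' j) (fun s hs => (hx' j s hs).1)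
      rw [hf, hf, h]
      simp only [val_some]
      linarith
  · obtain ⟨f', c', x', t, hM, ht, hc', hx', hle⟩ := chores hn v S E' C'
      (Finset.disjoint_of_subset_left hE' (Finset.disjoint_of_subset_right hC' hEC))
      (by rw [hC'card, hS]) (fun e he => hE e (hE' he))
    obtain ⟨f, hf, hf1, hf2, hf3⟩ := hcomb f'
    refine ⟨f, maxW_round v y f f' _ _ hperm hf hM, ?_⟩
    intro i j
    right; left
    refine ⟨t i, hC' (ht i).1, by rw [hf3 _ (Finset.mem_union_right _ (ht i).1)]; exact (ht i).2, ?_⟩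
    have h2 := hle i j
    have h3 := hneg i j
    have h4 : v i (c' j) + val (v i) (x' j) ≤ val (v i) (y i).1 + val (v i) (y i).2 := by
      rcases h : (y i).1 with _ | s
      · have he := (hV.2.2.2.2.1 i).resolve_left id h
        rw [he]
        have := hst' (c' j) (hC' (hc' j)) (x' j) (fun s hs => hE' (hx' j s hs)) i
        simpa using this
      · rw [← h]
        exact ha i (by simp [h]) (c' j) (hc' j) (x' j) (fun s hs => hx' j s hs)
    rw [hf, hf]
    linarith

/-- merging of chores into goods -/
lemma merge {I : Type} [Fintype I] [DecidableEq I] {n : ℕ} (u : Fin n → I → ℝ) :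
    ∃ (h : I → I) (E C : Finset I) (v : Fin n → I → ℝ), Disjoint E C ∧
      (∀ i s, v i s = ∑ t with h t = s, u i t) ∧
      (∀ t, h t ∈ E ∪ C) ∧ (∀ s ∈ E ∪ C, h s = s) ∧
      (∀ e ∈ E, ∃ i, 0 < v i e) ∧ (∀ c ∈ C, ∀ i, v i c ≤ 0) ∧
      (∀ e ∈ E, ∀ c ∈ C, ∀ i, v i e + v i c ≤ 0) ∧
      (∀ c ∈ C, ∀ i, v i c = u i c) ∧ (∀ e ∈ E, ∀ i, v i e ≤ u i e) := by
  classical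
  let E : Finset I := Finset.univ.filter fun t => ∃ i, 0 < u i t
  have mE : ∀ t, t ∈ E ↔ ∃ i, 0 < u i t := by simp [E]
  have nE : ∀ t, t ∉ E → ∀ i, u i t ≤ 0 := by
    intro t ht i; rw [mE] at ht; push Not at ht; exact ht i
  let V : (I → I) → Fin n → I → ℝ := fun h i s => ∑ t with h t = s, u i t
  let P : (I → I) → Prop := fun h => (∀ e ∈ E, h e = e) ∧ (∀ t, h t = t ∨ h t ∈ E) ∧
    ∀ e ∈ E, ∃ i, 0 < V h i e
  obtain ⟨h, hP, hmax⟩ := Finset.exists_max_image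
    (Finset.univ.filter fun h : I → I => P h)
    (fun h => (Finset.univ.filter fun t => h t ≠ t).card) (by
      refine ⟨id, ?_⟩
      simp only [Finset.mem_filter, Finset.mem_univ, true_and]
      refine ⟨fun _ _ => rfl, fun _ => Or.inl rfl, ?_⟩
      intro e he
      obtain ⟨i, hi⟩ := (mE e).1 he
      refine ⟨i, ?_⟩
      simp only [V, id]
      rw [Finset.sum_filter, Finset.sum_ite_eq' ]
      simpa using hi)
  have hP : P h := by simpa using hP
  obtain ⟨hP1, hP2, hP3⟩ := hP
  let C : Finset I := Finset.univ.filter fun t => t ∉ E ∧ h t = t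
  have mC : ∀ t, t ∈ C ↔ t ∉ E ∧ h t = t := by simp [C]
  have hVC : ∀ c ∈ C, ∀ i, V h i c = u i c := by
    intro c hc i
    obtain ⟨hc1, hc2⟩ := (mC c).1 hc
    have : (Finset.univ.filter fun t => h t = c) = {c} := by
      ext t
      simp only [Finset.mem_filter, Finset.mem_univ, true_and, Finset.mem_singleton]
      constructor
      · intro ht
        rcases hP2 t with h' | h'
        · rw [← h', ht]
        · rw [ht] at h'; exact absurd h' hc1
      · rintro rfl; exact hc2
    simp only [V, this, Finset.sum_singleton]
  refine ⟨h, E, C, V h, ?_, fun _ _ => rfl, ?_, ?_, hP3, ?_, ?_, hVC, ?_⟩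
  · rw [Finset.disjoint_left]; intro t a b; exact ((mC t).1 b).1 a
  · intro t
    rw [Finset.mem_union]
    by_cases ht : h t ∈ E
    · exact Or.inl ht
    · right
      have := (hP2 t).resolve_right ht
      rw [mC]; exact ⟨ht, by rw [this, this]⟩
  · intro s hs
    rcases Finset.mem_union.1 hs with hs | hs
    · exact hP1 s hs
    · exact ((mC s).1 hs).2
  · intro c hc i
    rw [hVC c hc i]; exact nE c ((mC c).1 hc).1 i
  · intro e he c hc i
    by_contra hlt
    push Not at hlt
    obtain ⟨hc1, hc2⟩ := (mC c).1 hc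
    have hce : c ≠ e := fun h => hc1 (h ▸ he)
    rw [hVC c hc i] at hlt
    let h' := Function.update h c e
    have hV' : ∀ j s, s ∈ E → V h' j s = V h j s + if s = e then u j c else 0 := by
      intro j s hs
      simp only [V, Finset.sum_filter]
      rw [← Finset.add_sum_erase _ _ (Finset.mem_univ c),
        ← Finset.add_sum_erase (a := c) _ (fun t => if h t = s then u j t else 0) (Finset.mem_univ c)]
      have h2 : ∑ x ∈ Finset.univ.erase c, (if h' x = s then u j x else 0) =
          ∑ x ∈ Finset.univ.erase c, (if h x = s then u j x else 0) := by
        apply Finset.sum_congr rfl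
        intro x hx
        have hx' : h' x = h x := Function.update_of_ne (Finset.ne_of_mem_erase hx) _ _
        simp only [hx']
      rw [h2]
      have hcs : c ≠ s := fun h => hc1 (h ▸ hs)
      simp only [h', Function.update_self, hc2, hcs, if_false, eq_comm (a := e)]
      ring
    have hP' : P h' := by
      refine ⟨?_, ?_, ?_⟩
      · intro s hs
        have hcs : s ≠ c := fun h => hc1 (h ▸ hs)
        simp only [h']; rw [Function.update_of_ne hcs]; exact hP1 s hs
      · intro t
        by_cases ht : t = c
        · subst ht; right; simpa [h'] using he
        · simp only [h']; rw [Function.update_of_ne ht]; exact hP2 t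
      · intro s hs
        by_cases hse : s = e
        · subst hse
          exact ⟨i, by rw [hV' i s hs]; simpa using hlt⟩
        · obtain ⟨j, hj⟩ := hP3 s hs
          exact ⟨j, by rw [hV' j s hs]; simpa [hse] using hj⟩
    have hle := hmax h' (by simpa using hP')
    have : (Finset.univ.filter fun t => h t ≠ t).card < (Finset.univ.filter fun t => h' t ≠ t).card := by
      apply Finset.card_lt_card
      rw [Finset.ssubset_iff_of_subset]
      · refine ⟨c, ?_, ?_⟩
        · simpa [h'] using hce.symm
        · simpa using hc2
      · intro t ht
        simp only [Finset.mem_filter, Finset.mem_univ, true_and] at ht ⊢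
        have : t ≠ c := by rintro rfl; exact ht hc2
        simp only [h']; rwa [Function.update_of_ne this]
    omega
  · intro e he i
    simp only [V]
    rw [← Finset.add_sum_erase (a := e) _ _ (by simpa using hP1 e he)]
    have : ∑ x ∈ (Finset.univ.filter fun t => h t = e).erase e, u i x ≤ 0 := by
      apply Finset.sum_nonpos
      intro t ht
      obtain ⟨h1, h2⟩ := Finset.mem_erase.1 ht
      apply nE
      intro hE
      have h3 := hP1 t hE
      rw [(Finset.mem_filter.1 h2).2] at h3
      exact h1 h3.symm
    linarith

/-- weight of a path starting at `i` -/
def pw {n : ℕ} (d : Fin n → Fin n → ℝ) : Fin n → List (Fin n) → ℝ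
  | _, [] => 0
  | i, j :: l => d i j + pw d j l

lemma pw_append {n : ℕ} (d : Fin n → Fin n → ℝ) (i k : Fin n) (l l' : List (Fin n)) :
    pw d i (l ++ k :: l') = pw d i (l ++ [k]) + pw d k l' := by
  induction l generalizing i with
  | nil => simp [pw]
  | cons a l ih => simp only [List.cons_append, pw]; rw [ih]; ring

lemma cycle_aux {n : ℕ} (d : Fin n → Fin n → ℝ) (a : Fin n) (l : List (Fin n)) (b : Fin n) (π : Fin n → Fin n)
    (h : (a :: l).map π = l ++ [b]) : pw d a (l ++ [b]) = ((a :: l).map fun x => d x (π x)).sum := by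
  induction l generalizing a with
  | nil => simp at h; simp [pw, h]
  | cons c l ih =>
    simp only [List.map_cons, List.cons_append, List.cons.injEq] at h
    have h2 := ih c (by simpa using h.2)
    simp only [List.cons_append, pw]
    rw [h2]
    simp [h.1]

lemma potentials {n : ℕ} (w : Fin n → Fin n → ℝ)
    (hw : ∀ π : Equiv.Perm (Fin n), ∑ i, w i (π i) ≤ ∑ i, w i i) :
    ∃ q : Fin n → ℝ, ∀ i j, w i j + q j ≤ w i i + q i := by
  classical
  let d : Fin n → Fin n → ℝ := fun i j => w i j - w i i
  have hd : ∀ π : Equiv.Perm (Fin n), ∑ i, d i (π i) ≤ 0 := by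
    intro π; simp only [d, Finset.sum_sub_distrib]; linarith [hw π]
  have hcyc : ∀ (a : Fin n) (l : List (Fin n)), (a :: l).Nodup → pw d a (l ++ [a]) ≤ 0 := by
    intro a l hl
    have hmap : (a :: l).map (List.formPerm (a :: l)) = l ++ [a] := by
      apply List.ext_getElem
      · simp
      · intro k h1 h2
        simp only [List.getElem_map]
        rw [List.formPerm_apply_getElem _ hl]
        simp only [List.length_map, List.length_cons] at h1
        by_cases hk : k < l.length
        · have : (k + 1) % (a :: l).length = k + 1 := Nat.mod_eq_of_lt (by simpa using hk)
          simp only [this, List.getElem_cons_succ]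
          rw [List.getElem_append_left hk]
        · have hk' : k = l.length := by omega
          subst hk'
          simp
    rw [cycle_aux d a l a _ hmap]
    rw [← List.sum_toFinset _ hl]
    refine le_trans (le_of_eq ?_) (hd (List.formPerm (a :: l)))
    apply Finset.sum_subset (Finset.subset_univ _)
    intro x _ hx
    rw [List.formPerm_apply_of_notMem (by simpa using hx)]
    simp [d]
  let F : Fin n → Set (List (Fin n)) := fun i => {l | (i :: l).Nodup}
  have hfin : ∀ i, (F i).Finite := by
    intro i
    refine (List.finite_length_le (Fin n) n).subset ?_
    intro l hl
    have h2 : (i :: l).Nodup := hl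
    have := h2.length_le_card
    simp at this
    change l.length ≤ n; omega
  have hex : ∀ i, ∃ l ∈ F i, ∀ l' ∈ F i, pw d i l' ≤ pw d i l := by
    intro i
    have := Set.exists_max_image (F i) (pw d i) (hfin i) ⟨[], by simp [F]⟩
    exact this
  choose L hL hLmax using hex
  refine ⟨fun i => pw d i (L i), ?_⟩
  intro i j
  suffices d i j + pw d j (L j) ≤ pw d i (L i) by simp only [d] at this ⊢; linarith
  have hnd : (j :: L j).Nodup := hL j
  by_cases hij : i ∈ (j :: L j)
  · obtain ⟨l1, l2, h12⟩ := List.append_of_mem hij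
    have e1 : d i j + pw d j (L j) = pw d i (j :: L j) := rfl
    rw [e1, h12, pw_append]
    rw [h12] at hnd
    have n1 : (i :: l1).Nodup := by
      have := List.nodup_middle.1 hnd
      rw [← List.cons_append] at this
      exact (List.nodup_append.1 this).1
    have n2 : (i :: l2).Nodup := (List.nodup_append.1 hnd).2.1
    linarith [hcyc i l1 n1, hLmax i l2 n2]
  · exact hLmax i (j :: L j) (List.nodup_cons.2 ⟨hij, hnd⟩)

lemma waterfill {n : ℕ} (hn : 0 < n) (q : Fin n → ℝ) :
    ∃ c : ℝ, ∑ i, max (q i - c) 0 = 1 := by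
  have hne : (Finset.univ : Finset (Fin n)).Nonempty := ⟨⟨0, hn⟩, Finset.mem_univ _⟩
  obtain ⟨m, -, hm⟩ := Finset.exists_max_image Finset.univ q hne
  have hcont : Continuous fun c : ℝ => ∑ i, max (q i - c) 0 := by fun_prop
  have hIVT := intermediate_value_Icc' (a := q m - 1) (b := q m) (by linarith) hcont.continuousOn
  have h0 : ∑ i, max (q i - q m) 0 = 0 := by
    apply Finset.sum_eq_zero
    intro i _
    exact max_eq_right (by linarith [hm i (Finset.mem_univ i)])
  have h1 : 1 ≤ ∑ i, max (q i - (q m - 1)) 0 := by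
    have := Finset.single_le_sum (f := fun i => max (q i - (q m - 1)) 0)
      (fun i _ => le_max_right _ _) (Finset.mem_univ m)
    refine le_trans ?_ this
    exact le_trans (by linarith) (le_max_left _ _)
  have hmem : (1 : ℝ) ∈ Set.Icc (∑ i, max (q i - q m) 0) (∑ i, max (q i - (q m - 1)) 0) := by
    rw [h0]; exact ⟨by norm_num, h1⟩
  obtain ⟨c, -, hc⟩ := hIVT hmem
  exact ⟨c, hc⟩

end EFM


/-- With indivisible goods and chores together with one unit of money, an EFM
allocation always exists: there are a partition `A` of the items and nonnegative payments
summing to `1` such that `{(A_i, p_i)}` is EFM with money. -/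
theorem efm_with_money_exists
    (n : ℕ) (hn : 0 < n) (I : Type) [Fintype I] [DecidableEq I]
    (u : Fin n → I → ℝ) :
    ∃ (A : Fin n → Finset I) (p : Fin n → ℝ),
      -- A is a partition of the items
      (∀ i j, i ≠ j → Disjoint (A i) (A j)) ∧
      (Finset.univ.biUnion A = Finset.univ) ∧
      -- payments are nonnegative and sum to 1
      (∀ i, 0 ≤ p i) ∧
      (∑ i, p i) = 1 ∧
      -- {(A_i, p_i)} is EFM with money
      (∀ i j : Fin n,
        (∑ t ∈ A i, u i t) + p i ≥ (∑ t ∈ A j, u i t) + p j ∨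
          (p j = 0 ∧
            ∃ t ∈ A i ∪ A j,
              (∑ s ∈ (A i).erase t, u i s) ≥ ∑ s ∈ (A j).erase t, u i s)) := by
  classical
  obtain ⟨h, E, C, v, hEC, hv, hh, hfix, hE, hC, hst, hvC, hvE⟩ := EFM.merge u
  obtain ⟨f, hM, hF⟩ := EFM.core hn v E C hEC hE hC hst
  let A : Fin n → Finset I := fun j => Finset.univ.filter fun t => f (h t) = j
  have hA : ∀ i j, ∑ t ∈ A j, u i t = EFM.bv (v i) f (E ∪ C) j := by
    intro i j
    unfold EFM.bv
    have hmaps : ∀ t ∈ A j, h t ∈ (E ∪ C).filter (fun s => f s = j) := by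
      intro t ht
      rw [Finset.mem_filter]
      exact ⟨hh t, by simpa [A] using ht⟩
    rw [← Finset.sum_fiberwise_of_maps_to hmaps]
    apply Finset.sum_congr rfl
    intro s hs
    rw [hv]
    apply Finset.sum_congr _ (fun _ _ => rfl)
    ext t
    simp only [A, Finset.mem_filter, Finset.mem_univ, true_and]
    constructor
    · exact fun h => h.2
    · intro ht; exact ⟨by rw [ht]; exact (Finset.mem_filter.1 hs).2, ht⟩
  obtain ⟨q, hq⟩ := EFM.potentials (fun i j => EFM.bv (v i) f (E ∪ C) j) hM
  obtain ⟨c, hc⟩ := EFM.waterfill hn q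
  refine ⟨A, fun i => max (q i - c) 0, ?_, ?_, fun i => le_max_right _ _, hc, ?_⟩
  · intro i j hij
    rw [Finset.disjoint_left]
    intro t a b
    simp only [A, Finset.mem_filter, Finset.mem_univ, true_and] at a b
    exact hij (a.symm.trans b)
  · ext t; simp [A]
  · intro i j
    have hqij := hq i j
    rcases le_or_gt (q j - c) 0 with hj | hj
    · have hpj : max (q j - c) 0 = 0 := max_eq_right hj
      have hpi : 0 ≤ max (q i - c) 0 := le_max_right _ _
      by_cases hij : i = j
      · left; subst hij; exact le_rfl
      rcases hF i j with h1 | ⟨t, ht, hft, h1⟩ | ⟨t, ht, hft, h1⟩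
      · left
        rw [hA, hA]; beta_reduce; rw [hpj]; linarith
      · right
        refine ⟨hpj, t, ?_, ?_⟩
        · apply Finset.mem_union_left
          simp [A, hfix t (Finset.mem_union_right _ ht), hft]
        · have m1 : t ∈ A i := by simp [A, hfix t (Finset.mem_union_right _ ht), hft]
          have m2 : t ∉ A j := by simp [A, hfix t (Finset.mem_union_right _ ht), hft, hij]
          rw [Finset.erase_eq_of_notMem m2, hA]
          have h2 := Finset.add_sum_erase (A i) (u i) m1
          rw [hA] at h2
          rw [hvC t ht] at h1
          linarith
      · right
        refine ⟨hpj, t, ?_, ?_⟩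
        · apply Finset.mem_union_right
          simp [A, hfix t (Finset.mem_union_left _ ht), hft]
        · have m1 : t ∈ A j := by simp [A, hfix t (Finset.mem_union_left _ ht), hft]
          have m2 : t ∉ A i := by
            simp [A, hfix t (Finset.mem_union_left _ ht), hft]; exact fun h => hij h.symm
          rw [Finset.erase_eq_of_notMem m2, hA]
          have h2 := Finset.add_sum_erase (A j) (u i) m1
          rw [hA] at h2
          have := hvE t ht i
          linarith
    · left
      have hpj : max (q j - c) 0 = q j - c := max_eq_left hj.le
      have hpi : q i - c ≤ max (q i - c) 0 := le_max_left _ _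
      rw [hA, hA]; beta_reduce; rw [hpj]
      linarith
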